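/- Let f : ℤⁿ → ℝ ∪ {+∞} and α be a positive integer, and define the scaled function f^α : ℤⁿ → ℝ ∪ {+∞} by f^α(x) = f(αx). If f is globally discrete midpoint convex, then f^α is globally discrete midpoint convex; if f is locally discrete midpoint convex, then f^α is locally discrete midpoint convex. -/

import Mathlib

/-- The ℓ∞-norm of an integer vector, as a natural number. -/
def linf {n : ℕ} (z : Fin n → ℤ) : ℕ :=
  Finset.univ.sup fun i => (z i).natAbs

/-- Componentwise round-up of (x+y)/2. -/
def avgUp {n : ℕ} (x y : Fin n → ℤ) : Fin n → ℤ :=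
  fun i => ⌈((x i + y i : ℚ)) / 2⌉

/-- Componentwise round-down of (x+y)/2. -/
def avgDown {n : ℕ} (x y : Fin n → ℤ) : Fin n → ℤ :=
  fun i => ⌊((x i + y i : ℚ)) / 2⌋

/-- A set `S ⊆ ℤⁿ` is discrete midpoint convex. -/
def DMCSet {n : ℕ} (S : Set (Fin n → ℤ)) : Prop :=
  ∀ ⦃x⦄, x ∈ S → ∀ ⦃y⦄, y ∈ S → 2 ≤ linf (x - y) →
    avgUp x y ∈ S ∧ avgDown x y ∈ S

/-- `f` satisfies discrete midpoint convexity for the pair `(x, y)`.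
Values are in `ℝ ∪ {+∞}`, modeled as `WithTop ℝ`. -/
def DMCPair {n : ℕ} (f : (Fin n → ℤ) → WithTop ℝ) (x y : Fin n → ℤ) : Prop :=
  f (avgUp x y) + f (avgDown x y) ≤ f x + f y

/-- `f` is globally discrete midpoint convex. -/
def GloballyDMC {n : ℕ} (f : (Fin n → ℤ) → WithTop ℝ) : Prop :=
  ∀ x y : Fin n → ℤ, 2 ≤ linf (x - y) → DMCPair f x y

/-- The effective domain of `f`. -/
def effDom {n : ℕ} (f : (Fin n → ℤ) → WithTop ℝ) : Set (Fin n → ℤ) :=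
  {x | f x ≠ ⊤}

/-- `f` is locally discrete midpoint convex. -/
def LocallyDMC {n : ℕ} (f : (Fin n → ℤ) → WithTop ℝ) : Prop :=
  DMCSet (effDom f) ∧ ∀ x y : Fin n → ℤ, linf (x - y) = 2 → DMCPair f x y

/-!
Let `d = y - x`, and let `u` and `v` be `d / 2` rounded up and down, so that `u + v = d`. Midpoint
convexity of `f` for the pair `(w, w + d)` is the inequality
`f (w + u) + f (w + v) ≤ f w + f (w + u + v)` on a cell of the grid `p + i u + j v`, where
`p = α x`; summing it over the `α × α` cells gives midpoint convexity of `f^α` for `(x, y)`.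

The sum may be cancelled because `f` is finite on the whole grid once it is finite at `α x` and
`α y`. For the diagonal `p + k d` this holds because a discrete midpoint convex set contains every
integer point that is an average of points in it: replacing two distant points by their rounded
midpoints keeps the average and decreases the sum of squared norms, until all points are so close
that the average is one of them. From the diagonal, finiteness spreads cell by cell to the rest of
the grid; its corners `p + α u` and `p + α v` then show that the domain of `f^α` is discrete
midpoint convex.
-/

section Grid

variable {A : Type*} [AddCommMonoid A] {p u v : A} {m : ℕ}

theorem add_nsmul_add_nsmul_mem_of_diagonal {S : Set A}
    (hcell : ∀ w ∈ S, w + (u + v) ∈ S → w + u ∈ S) (hdiag : ∀ k ≤ m, p + k • (u + v) ∈ S)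
    {k d : ℕ} (hkd : k + d ≤ m) : p + (k + d) • u + k • v ∈ S := by
  induction d generalizing k with
  | zero =>
    convert hdiag k hkd using 1
    module
  | succ d ih =>
    have hfar : p + (k + d) • u + k • v + (u + v) ∈ S := by
      convert ih (k := k + 1) (by lia) using 1
      module
    convert hcell _ (ih (by lia)) hfar using 1
    module

theorem grid_mem_of_diagonal {S : Set A}
    (hcell : ∀ w ∈ S, w + (u + v) ∈ S → w + u ∈ S ∧ w + v ∈ S)
    (hdiag : ∀ k ≤ m, p + k • (u + v) ∈ S) {i j : ℕ} (hi : i ≤ m) (hj : j ≤ m) :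
    p + i • u + j • v ∈ S := by
  obtain h | h := le_total j i
  · obtain ⟨d, rfl⟩ := Nat.exists_eq_add_of_le h
    exact add_nsmul_add_nsmul_mem_of_diagonal (fun w hw hw' ↦ (hcell w hw hw').1) hdiag hi
  · obtain ⟨d, rfl⟩ := Nat.exists_eq_add_of_le h
    rw [add_right_comm]
    simp only [add_comm u v] at hcell hdiag
    exact add_nsmul_add_nsmul_mem_of_diagonal (fun w hw hw' ↦ (hcell w hw hw').2) hdiag hj

theorem corner_add_corner_le_of_cells {G : Type*} [AddCommGroup G] [PartialOrder G]
    [IsOrderedAddMonoid G] {n : ℕ} (F : ℕ → ℕ → G)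
    (hcell : ∀ i < m, ∀ j < n, F (i + 1) j + F i (j + 1) ≤ F i j + F (i + 1) (j + 1)) :
    F m 0 + F 0 n ≤ F 0 0 + F m n := by
  have hsum : ∑ i ∈ Finset.range m, ∑ j ∈ Finset.range n,
      ((F (i + 1) (j + 1) - F i (j + 1)) - (F (i + 1) j - F i j)) =
        (F 0 0 + F m n) - (F m 0 + F 0 n) :=
    calc
      _ = ∑ i ∈ Finset.range m, ((F (i + 1) n - F i n) - (F (i + 1) 0 - F i 0)) :=
        Finset.sum_congr rfl fun i _ ↦ Finset.sum_range_sub (fun j ↦ F (i + 1) j - F i j) n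
      _ = (F m n - F 0 n) - (F m 0 - F 0 0) := by
        rw [Finset.sum_sub_distrib, Finset.sum_range_sub (F · n), Finset.sum_range_sub (F · 0)]
      _ = (F 0 0 + F m n) - (F m 0 + F 0 n) := by abel
  rw [← sub_nonneg, ← hsum]
  refine Finset.sum_nonneg fun i hi ↦ Finset.sum_nonneg fun j hj ↦ ?_
  convert sub_nonneg.2 (hcell i (Finset.mem_range.1 hi) j (Finset.mem_range.1 hj)) using 1
  abel

theorem ne_top_and_ne_top_of_add_le_add {G : Type*} [Add G] [PartialOrder G] {a b c d : WithTop G}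
    (h : a + b ≤ c + d) (hc : c ≠ ⊤) (hd : d ≠ ⊤) : a ≠ ⊤ ∧ b ≠ ⊤ :=
  WithTop.add_ne_top.1 (ne_top_of_le_ne_top (WithTop.add_ne_top.2 ⟨hc, hd⟩) h)

theorem corner_add_corner_le_of_cells_of_diagonal_ne_top {G : Type*} [AddCommGroup G]
    [PartialOrder G] [IsOrderedAddMonoid G] {f : A → WithTop G}
    (hcell : ∀ w, f (w + u) + f (w + v) ≤ f w + f (w + (u + v)))
    (hdiag : ∀ k ≤ m, f (p + k • (u + v)) ≠ ⊤) :
    f (p + m • u) + f (p + m • v) ≤ f p + f (p + m • (u + v)) := by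
  have hfinite : ∀ i j, i ≤ m → j ≤ m → ∃ r : G, r = f (p + i • u + j • v) := fun i j hi hj ↦
    WithTop.ne_top_iff_exists.1 <| grid_mem_of_diagonal (S := {w | f w ≠ ⊤})
      (fun w ↦ ne_top_and_ne_top_of_add_le_add (hcell w)) hdiag hi hj
  choose! F hF using hfinite
  have hcorners : F m 0 + F 0 m ≤ F 0 0 + F m m := by
    refine corner_add_corner_le_of_cells F fun i hi j hj ↦ ?_
    have h := hcell (p + i • u + j • v)
    rw [show p + i • u + j • v + u = p + (i + 1) • u + j • v by module,
      show p + i • u + j • v + v = p + i • u + (j + 1) • v by module,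
      show p + i • u + j • v + (u + v) = p + (i + 1) • u + (j + 1) • v by module,
      ← hF _ _ hi.le hj.le, ← hF _ _ hi hj.le, ← hF _ _ hi.le hj, ← hF _ _ hi hj] at h
    exact_mod_cast h
  rw [← WithTop.coe_le_coe] at hcorners
  simpa [hF, nsmul_add, add_assoc] using hcorners

end Grid

theorem eq_of_add_sum_eq_of_abs_sub_le_one {a z : ℤ} {M : Multiset ℤ}
    (hM : ∀ b ∈ M, |a - b| ≤ 1) (hsum : a + M.sum = (M.card + 1) * z) : a = z := by
  obtain h | h | h := lt_trichotomy a z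
  · have hle : M.sum ≤ M.card • z := M.sum_le_card_nsmul z fun b hb ↦ by grind
    rw [nsmul_eq_mul] at hle
    linarith
  · exact h
  · have hge : M.card • z ≤ M.sum := M.card_nsmul_le_sum fun b hb ↦ by grind
    rw [nsmul_eq_mul] at hge
    linarith

variable {n : ℕ}

section Norms

theorem linf_le_iff {z : Fin n → ℤ} {c : ℕ} : linf z ≤ c ↔ ∀ i, (z i).natAbs ≤ c := by
  simp [linf]

theorem le_linf_iff {z : Fin n → ℤ} {c : ℕ} (hc : 0 < c) :
    c ≤ linf z ↔ ∃ i, c ≤ (z i).natAbs := by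
  simp [linf, Finset.le_sup_iff hc]

@[simp]
theorem linf_neg (z : Fin n → ℤ) : linf (-z) = linf z := by
  simp [linf]

/-- The squared Euclidean norm of an integer vector. It is natural-valued, so that one can induct
on a sum of squared norms. -/
def sqNorm (z : Fin n → ℤ) : ℕ :=
  ∑ i, (z i).natAbs ^ 2

theorem sqNorm_add_add_sqNorm_sub (x y : Fin n → ℤ) :
    sqNorm (x + y) + sqNorm (x - y) = 2 * (sqNorm x + sqNorm y) := by
  simp only [sqNorm, ← Finset.sum_add_distrib, Finset.mul_sum]
  refine Finset.sum_congr rfl fun i _ ↦ ?_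
  zify
  simp only [Pi.add_apply, Pi.sub_apply, sq_abs]
  ring

theorem sqNorm_lt_sqNorm {w z : Fin n → ℤ} (hle : ∀ i, (w i).natAbs ≤ (z i).natAbs)
    (hlt : ∃ i, (w i).natAbs < (z i).natAbs) : sqNorm w < sqNorm z := by
  obtain ⟨k, hk⟩ := hlt
  exact Finset.sum_lt_sum (fun i _ ↦ Nat.pow_le_pow_left (hle i) 2)
    ⟨k, Finset.mem_univ k, Nat.pow_lt_pow_left hk two_ne_zero⟩

end Norms

section Midpoints

theorem avgUp_apply (x y : Fin n → ℤ) (i : Fin n) : avgUp x y i = (x i + y i + 1) / 2 := by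
  have h := Rat.ceil_intCast_div_natCast (x i + y i) 2
  push_cast at h
  rw [avgUp, h]
  lia

theorem avgDown_apply (x y : Fin n → ℤ) (i : Fin n) : avgDown x y i = (x i + y i) / 2 := by
  have h := Rat.floor_intCast_div_natCast (x i + y i) 2
  push_cast at h
  rw [avgDown, h]

theorem avgUp_add_avgDown (x y : Fin n → ℤ) : avgUp x y + avgDown x y = x + y := by
  ext i
  simp only [Pi.add_apply, avgUp_apply, avgDown_apply]
  lia

theorem avgUp_add_right (x d : Fin n → ℤ) : avgUp x (x + d) = x + avgUp 0 d := by
  ext i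
  simp only [Pi.add_apply, Pi.zero_apply, avgUp_apply]
  lia

theorem avgDown_add_right (x d : Fin n → ℤ) : avgDown x (x + d) = x + avgDown 0 d := by
  ext i
  simp only [Pi.add_apply, Pi.zero_apply, avgDown_apply]
  lia

theorem avgUp_zero_add_avgDown_zero (d : Fin n → ℤ) : avgUp 0 d + avgDown 0 d = d := by
  rw [avgUp_add_avgDown, zero_add]

theorem sqNorm_avgUp_sub_avgDown_lt {x y : Fin n → ℤ} (hxy : 2 ≤ linf (x - y)) :
    sqNorm (avgUp x y - avgDown x y) < sqNorm (x - y) := by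
  obtain ⟨k, hk⟩ := (le_linf_iff two_pos).1 hxy
  refine sqNorm_lt_sqNorm (fun i ↦ ?_) ⟨k, ?_⟩ <;>
  · simp only [Pi.sub_apply, avgUp_apply, avgDown_apply] at hk ⊢
    lia

theorem sqNorm_avgUp_add_sqNorm_avgDown_lt {x y : Fin n → ℤ} (hxy : 2 ≤ linf (x - y)) :
    sqNorm (avgUp x y) + sqNorm (avgDown x y) < sqNorm x + sqNorm y := by
  have havg := sqNorm_add_add_sqNorm_sub (avgUp x y) (avgDown x y)
  rw [avgUp_add_avgDown] at havg
  linarith [sqNorm_add_add_sqNorm_sub x y, sqNorm_avgUp_sub_avgDown_lt hxy]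

end Midpoints

theorem eq_of_sum_cons_eq_card_nsmul {a z : Fin n → ℤ} {M : Multiset (Fin n → ℤ)}
    (hM : ∀ b ∈ M, linf (a - b) ≤ 1) (hsum : (a ::ₘ M).sum = (a ::ₘ M).card • z) : a = z := by
  ext i
  refine eq_of_add_sum_eq_of_abs_sub_le_one (M := M.map (· i)) (fun c hc ↦ ?_) ?_
  · obtain ⟨b, hb, rfl⟩ := Multiset.mem_map.1 hc
    have hle := linf_le_iff.1 (hM b hb) i
    rw [Pi.sub_apply] at hle
    rw [Int.abs_eq_natAbs]
    exact_mod_cast hle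
  · simpa [Pi.multiset_sum_apply] using congrFun hsum i

namespace DMCSet

variable {S : Set (Fin n → ℤ)}

theorem mem_of_sum_eq_card_nsmul (hS : DMCSet S) {z : Fin n → ℤ} {M : Multiset (Fin n → ℤ)}
    (hMS : ∀ x ∈ M, x ∈ S) (hM : M ≠ 0) (hsum : M.sum = M.card • z) : z ∈ S := by
  induction hN : (M.map sqNorm).sum using Nat.strong_induction_on generalizing M with
  | _ N ih =>
  subst hN
  obtain ⟨a, ha⟩ := Multiset.exists_mem_of_ne_zero hM
  obtain ⟨M, rfl⟩ := Multiset.exists_cons_of_mem ha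
  by_cases hfar : ∃ b ∈ M, 2 ≤ linf (a - b)
  · obtain ⟨b, hb, hab⟩ := hfar
    obtain ⟨M, rfl⟩ := Multiset.exists_cons_of_mem hb
    simp only [Multiset.forall_mem_cons] at hMS
    obtain ⟨hup, hdown⟩ := hS hMS.1 hMS.2.1 hab
    refine ih _ ?_ (M := avgUp a b ::ₘ avgDown a b ::ₘ M) ?_ (by simp) ?_ rfl
    · simpa [← add_assoc] using sqNorm_avgUp_add_sqNorm_avgDown_lt hab
    · simpa only [Multiset.forall_mem_cons] using ⟨hup, hdown, hMS.2.2⟩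
    · simpa only [Multiset.sum_cons, Multiset.card_cons, ← add_assoc, avgUp_add_avgDown] using hsum
  · push Not at hfar
    rw [← eq_of_sum_cons_eq_card_nsmul (fun b hb ↦ Nat.le_of_lt_succ (hfar b hb)) hsum]
    exact hMS a ha

theorem add_nsmul_mem (hS : DMCSet S) {p d : Fin n → ℤ} {m k : ℕ} (hp : p ∈ S)
    (hq : p + m • d ∈ S) (hk : k ≤ m) : p + k • d ∈ S := by
  obtain rfl | hk₀ := k.eq_zero_or_pos
  · simpa using hp
  obtain ⟨l, rfl⟩ := Nat.exists_eq_add_of_le hk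
  refine hS.mem_of_sum_eq_card_nsmul
    (M := .replicate k (p + (k + l) • d) + .replicate l p) (fun x hx ↦ ?_) ?_ ?_
  · obtain hx | hx := Multiset.mem_add.1 hx <;> rwa [Multiset.eq_of_mem_replicate hx]
  · simp [← Multiset.card_pos, hk₀]
  · simp only [Multiset.sum_add, Multiset.sum_replicate, Multiset.card_add,
      Multiset.card_replicate]
    module

theorem add_avg_mem (hS : DMCSet S) {w d : Fin n → ℤ} (hd : 2 ≤ linf d) (hw : w ∈ S)
    (hw' : w + d ∈ S) : w + avgUp 0 d ∈ S ∧ w + avgDown 0 d ∈ S := by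
  rw [← avgUp_add_right, ← avgDown_add_right]
  exact hS hw hw' (by simpa using hd)

theorem grid_mem (hS : DMCSet S) {p d : Fin n → ℤ} {m : ℕ} (hd : 2 ≤ linf d) (hp : p ∈ S)
    (hq : p + m • d ∈ S) {i j : ℕ} (hi : i ≤ m) (hj : j ≤ m) :
    p + i • avgUp 0 d + j • avgDown 0 d ∈ S := by
  refine grid_mem_of_diagonal (fun w hw hw' ↦ ?_) (fun k hk ↦ ?_) hi hj
  · rw [avgUp_zero_add_avgDown_zero] at hw'
    exact hS.add_avg_mem hd hw hw'
  · rw [avgUp_zero_add_avgDown_zero]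
    exact hS.add_nsmul_mem hp hq hk

theorem setOf_nsmul_mem (hS : DMCSet S) (m : ℕ) : DMCSet {z | m • z ∈ S} := by
  intro x hx y hy hxy
  obtain ⟨d, rfl⟩ : ∃ d, y = x + d := ⟨y - x, by abel⟩
  replace hxy : 2 ≤ linf d := by simpa using hxy
  simp only [Set.mem_ofPred_eq, avgUp_add_right, avgDown_add_right, nsmul_add] at hx hy ⊢
  exact ⟨by simpa using hS.grid_mem hxy hx hy le_rfl m.zero_le,
    by simpa using hS.grid_mem hxy hx hy m.zero_le le_rfl⟩

end DMCSet

section Functions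

variable {f : (Fin n → ℤ) → WithTop ℝ}

theorem dmcPair_add_right_iff {w d : Fin n → ℤ} :
    DMCPair f w (w + d) ↔ f (w + avgUp 0 d) + f (w + avgDown 0 d) ≤ f w + f (w + d) := by
  rw [DMCPair, avgUp_add_right, avgDown_add_right]

theorem GloballyDMC.dmcSet_effDom (hf : GloballyDMC f) : DMCSet (effDom f) :=
  fun _ hx _ hy hxy ↦ ne_top_and_ne_top_of_add_le_add (hf _ _ hxy) hx hy

theorem DMCPair.comp_nsmul (hS : DMCSet (effDom f)) {x y : Fin n → ℤ} (m : ℕ)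
    (hf : ∀ w, DMCPair f w (w + (y - x))) : DMCPair (fun z ↦ f (m • z)) x y := by
  obtain ⟨d, rfl⟩ : ∃ d, y = x + d := ⟨y - x, by abel⟩
  rw [add_sub_cancel_left] at hf
  simp only [dmcPair_add_right_iff, nsmul_add] at hf ⊢
  by_cases hx : f (m • x) = ⊤
  · rw [hx, top_add]
    exact le_top
  by_cases hy : f (m • x + m • d) = ⊤
  · rw [hy, add_top]
    exact le_top
  have hcorners := corner_add_corner_le_of_cells_of_diagonal_ne_top
    (f := f) (p := m • x) (u := avgUp 0 d) (v := avgDown 0 d) (m := m)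
  rw [avgUp_zero_add_avgDown_zero] at hcorners
  exact hcorners hf fun k hk ↦ hS.add_nsmul_mem hx hy hk

end Functions

/-- Scaling preserves both global and local discrete midpoint convexity:
with `f^α(x) = f(αx)`, if `f` is globally (resp. locally) discrete midpoint
convex then so is `f^α`. -/
theorem dmcFn_scaling {n : ℕ} (f : (Fin n → ℤ) → WithTop ℝ)
    (α : ℕ) (hα : 0 < α) :
    (GloballyDMC f → GloballyDMC (fun x => f ((α : ℤ) • x))) ∧
    (LocallyDMC f → LocallyDMC (fun x => f ((α : ℤ) • x))) := by
  simp only [natCast_zsmul]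
  refine ⟨fun hf x y hxy ↦ ?_, fun hf ↦ ⟨hf.1.setOf_nsmul_mem α, fun x y hxy ↦ ?_⟩⟩
  · exact .comp_nsmul hf.dmcSet_effDom α fun w ↦ hf _ _ (by simpa using hxy)
  · exact .comp_nsmul hf.1 α fun w ↦ hf.2 _ _ (by simpa using hxy)
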